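/- (Lifting rule for KL proximal operators through column marginals.) Let M, N ≥ 1, λ ∈ ℝ^M with λ_m > 0, and let h : (ℝ^N)^M → ℝ ∪ {+∞} be proper, lower semicontinuous and convex. Define f(π_1, …, π_M) = h(π_1^T𝟙, …, π_M^T𝟙) on M-tuples of N×N matrices. Then for all matrices π_1, …, π_M with strictly positive entries, writing p_m = π_m^T𝟙 and (p̃_1, …, p̃_M) = Prox^{KL_λ}_h(p_1, …, p_M) (assumed to exist uniquely with strictly positive entries), one has Prox^{KL_λ}_f(π_1, …, π_M) = ( π_1 diag(p̃_1 ⊘ p_1), …, π_M diag(p̃_M ⊘ p_M) ). -/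

import Mathlib

open scoped BigOperators

noncomputable section

def ProperLSCConvex {E : Type*} [AddCommGroup E] [Module ℝ E] [TopologicalSpace E]
    (f : E → EReal) : Prop :=
  (∀ x, f x ≠ ⊥) ∧ (∃ x, f x ≠ ⊤) ∧ LowerSemicontinuous f ∧
    ∀ x y : E, ∀ a b : ℝ, 0 ≤ a → 0 ≤ b → a + b = 1 →
      f (a • x + b • y) ≤ (a : EReal) * f x + (b : EReal) * f y

def KLvec {N : ℕ} (p q : Fin N → ℝ) : ℝ :=
  ∑ i, (p i * Real.log (p i / q i) - p i + q i)

def KLmat {N : ℕ} (π ξ : Fin N → Fin N → ℝ) : ℝ :=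
  ∑ i, ∑ j, (π i j * Real.log (π i j / ξ i j) - π i j + ξ i j)

/-- Weighted KL divergence between `M`-tuples of vectors. -/
def KLlamVec {M N : ℕ} (lam : Fin M → ℝ) (P Q : Fin M → Fin N → ℝ) : ℝ :=
  ∑ m, lam m * KLvec (P m) (Q m)

/-- Weighted KL divergence between `M`-tuples of matrices. -/
def KLlamMat {M N : ℕ} (lam : Fin M → ℝ)
    (Pi Xi : Fin M → Fin N → Fin N → ℝ) : ℝ :=
  ∑ m, lam m * KLmat (Pi m) (Xi m)

def IsUniqMinOn {α β : Type*} [Preorder β] (F : α → β) (S : Set α) (x : α) : Prop :=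
  x ∈ S ∧ (∀ y ∈ S, F x ≤ F y) ∧ ∀ y ∈ S, (∀ z ∈ S, F y ≤ F z) → y = x

/-
The KL divergence is the `f`-divergence of the strictly convex function `klFun`, so by Jensen's
inequality (the log-sum inequality) passing to column sums can only decrease it, and the divergence
of `S` from `A` is preserved exactly when each column of `S` is proportional to the corresponding
column of `A`. Hence the objective of the lifted problem dominates the objective of the marginal
problem at the marginals of `S`, and among all `S` with the optimal marginals only the rescaling of
the columns of `A` attains the bound.
-/

open Set InformationTheory

section UniqueMinimizer

variable {α β γ : Type*}

lemma IsUniqMinOn.ne_top [PartialOrder γ] [OrderTop γ] {F : α → γ} {S : Set α} {x : α}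
    (hx : IsUniqMinOn F S x) (hS : S.Nontrivial) : F x ≠ ⊤ := by
  obtain ⟨-, hmin, huniq⟩ := hx
  obtain ⟨y, hy, hyx⟩ := hS.exists_ne x
  intro htop
  have eq_top : ∀ z ∈ S, F z = ⊤ := fun z hz => top_le_iff.1 (htop ▸ hmin z hz)
  exact hyx (huniq y hy fun z hz => (eq_top z hz).symm ▸ le_top)

lemma IsUniqMinOn.lift [Preorder γ] {F : β → γ} {T : Set β} {b : β} (hb : IsUniqMinOn F T b)
    {G : α → γ} {S : Set α} {a : α} {q : α → β} (hq : MapsTo q S T) (ha : a ∈ S)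
    (hle : ∀ s ∈ S, F (q s) ≤ G s) (hGa : G a ≤ F b)
    (hfiber : ∀ s ∈ S, q s = b → G s ≤ F b → s = a) : IsUniqMinOn G S a := by
  obtain ⟨-, hmin, huniq⟩ := hb
  refine ⟨ha, fun s hs => hGa.trans ((hmin _ (hq hs)).trans (hle s hs)), fun s hs hsmin => ?_⟩
  have hGs : G s ≤ F b := (hsmin a ha).trans hGa
  have hqs : q s = b := huniq _ (hq hs) fun z hz => ((hle s hs).trans hGs).trans (hmin z hz)
  exact hfiber s hs hqs hGs

end UniqueMinimizer

section LogSum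

variable {κ : Type*} [Fintype κ] {s q : κ → ℝ}

lemma sum_div_sum_eq_one (hQ : ∑ i, q i ≠ 0) : ∑ i, q i / ∑ k, q k = 1 := by
  rw [← Finset.sum_div, div_self hQ]

lemma sum_div_sum_smul_div (hq : ∀ i, q i ≠ 0) :
    ∑ i, (q i / ∑ k, q k) • (s i / q i) = (∑ i, s i) / ∑ i, q i := by
  rw [Finset.sum_div]
  refine Finset.sum_congr rfl fun i _ => ?_
  rw [smul_eq_mul, div_mul_div_comm, mul_comm, mul_div_mul_right _ _ (hq i)]

lemma sum_div_sum_smul (q x : κ → ℝ) :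
    ∑ i, (q i / ∑ k, q k) • x i = (∑ i, q i * x i) / ∑ i, q i := by
  simp only [smul_eq_mul, div_mul_eq_mul_div, Finset.sum_div]

lemma sum_mul_map_sum_div_sum_le [Nonempty κ] {f : ℝ → ℝ} {C : Set ℝ} (hf : ConvexOn ℝ C f)
    (hq : ∀ i, 0 < q i) (hC : ∀ i, s i / q i ∈ C) :
    (∑ i, q i) * f ((∑ i, s i) / ∑ i, q i) ≤ ∑ i, q i * f (s i / q i) := by
  have hQ : 0 < ∑ i, q i := Finset.sum_pos (fun i _ => hq i) Finset.univ_nonempty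
  have jensen := hf.map_sum_le (t := Finset.univ) (fun i _ => (div_pos (hq i) hQ).le)
    (sum_div_sum_eq_one hQ.ne') fun i _ => hC i
  rwa [sum_div_sum_smul_div fun i => (hq i).ne', sum_div_sum_smul, le_div_iff₀' hQ] at jensen

lemma sum_mul_map_sum_div_sum_eq_iff [Nonempty κ] {f : ℝ → ℝ} {C : Set ℝ}
    (hf : StrictConvexOn ℝ C f) (hq : ∀ i, 0 < q i) (hC : ∀ i, s i / q i ∈ C) :
    (∑ i, q i) * f ((∑ i, s i) / ∑ i, q i) = ∑ i, q i * f (s i / q i) ↔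
      ∀ i, s i / q i = (∑ k, s k) / ∑ k, q k := by
  have hQ : 0 < ∑ i, q i := Finset.sum_pos (fun i _ => hq i) Finset.univ_nonempty
  have jensen := hf.map_sum_eq_iff (t := Finset.univ) (fun i _ => div_pos (hq i) hQ)
    (sum_div_sum_eq_one hQ.ne') fun i _ => hC i
  rw [sum_div_sum_smul_div fun i => (hq i).ne', sum_div_sum_smul,
    eq_div_iff_mul_eq hQ.ne', mul_comm] at jensen
  simpa only [Finset.mem_univ, true_imp_iff] using jensen

/-- The contribution `x log (x / y) - x + y` of a pair of entries to the KL divergence, for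
`0 ≤ x` and `0 < y`. -/
def klTerm (x y : ℝ) : ℝ := x * Real.log (x / y) - x + y

lemma klTerm_eq_mul_klFun (x : ℝ) {y : ℝ} (hy : y ≠ 0) : klTerm x y = y * klFun (x / y) := by
  rw [klTerm, klFun_apply]
  field_simp
  ring

lemma klTerm_sum_le [Nonempty κ] (hs : ∀ i, 0 ≤ s i) (hq : ∀ i, 0 < q i) :
    klTerm (∑ i, s i) (∑ i, q i) ≤ ∑ i, klTerm (s i) (q i) := by
  have hQ : 0 < ∑ i, q i := Finset.sum_pos (fun i _ => hq i) Finset.univ_nonempty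
  simp only [klTerm_eq_mul_klFun _ hQ.ne', klTerm_eq_mul_klFun _ (hq _).ne']
  exact sum_mul_map_sum_div_sum_le convexOn_klFun hq fun i => div_nonneg (hs i) (hq i).le

lemma klTerm_sum_eq_iff [Nonempty κ] (hs : ∀ i, 0 ≤ s i) (hq : ∀ i, 0 < q i) :
    klTerm (∑ i, s i) (∑ i, q i) = ∑ i, klTerm (s i) (q i) ↔
      ∀ i, s i = q i * ((∑ k, s k) / ∑ k, q k) := by
  have hQ : 0 < ∑ i, q i := Finset.sum_pos (fun i _ => hq i) Finset.univ_nonempty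
  simp only [klTerm_eq_mul_klFun _ hQ.ne', klTerm_eq_mul_klFun _ (hq _).ne']
  rw [sum_mul_map_sum_div_sum_eq_iff strictConvexOn_klFun hq fun i => div_nonneg (hs i) (hq i).le]
  exact forall_congr' fun i => by rw [div_eq_iff (hq i).ne', mul_comm]

end LogSum

section ColumnMarginals

variable {ι κ γ : Type*}

/-- The column sums `A_mᵀ𝟙` of a tuple of matrices with rows indexed by `κ` and columns by `γ`. -/
def colMarginal [Fintype κ] (A : ι → κ → γ → ℝ) : ι → γ → ℝ := fun m j => ∑ i, A m i j

/-- The tuple `A_m diag(R_m ⊘ A_mᵀ𝟙)`, whose columns are proportional to those of `A` and whose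
column sums are `R`, provided those of `A` do not vanish. -/
def colRescale [Fintype κ] (A : ι → κ → γ → ℝ) (R : ι → γ → ℝ) : ι → κ → γ → ℝ :=
  fun m i j => A m i j * (R m j / colMarginal A m j)

/-- `KLlamVec` over arbitrary finite index types. -/
def tupleVecKL [Fintype ι] [Fintype γ] (lam : ι → ℝ) (P Q : ι → γ → ℝ) : ℝ :=
  ∑ m, lam m * ∑ j, klTerm (P m j) (Q m j)

/-- `KLlamMat` over arbitrary finite index types, so that the matrices may be rectangular. -/
def tupleMatKL [Fintype ι] [Fintype κ] [Fintype γ] (lam : ι → ℝ) (A B : ι → κ → γ → ℝ) : ℝ :=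
  ∑ m, lam m * ∑ i, ∑ j, klTerm (A m i j) (B m i j)

variable [Fintype κ] {A B : ι → κ → γ → ℝ} {R : ι → γ → ℝ}

lemma colMarginal_nonneg (hA : ∀ m i j, 0 ≤ A m i j) (m : ι) (j : γ) : 0 ≤ colMarginal A m j :=
  Finset.sum_nonneg fun i _ => hA m i j

lemma colRescale_nonneg (hA : ∀ m i j, 0 ≤ A m i j) (hR : ∀ m j, 0 ≤ R m j) (m : ι) (i : κ)
    (j : γ) : 0 ≤ colRescale A R m i j :=
  mul_nonneg (hA m i j) (div_nonneg (hR m j) (colMarginal_nonneg hA m j))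

lemma colMarginal_colRescale (hA : ∀ m j, colMarginal A m j ≠ 0) :
    colMarginal (colRescale A R) = R := by
  funext m j
  calc ∑ i, A m i j * (R m j / colMarginal A m j)
      = colMarginal A m j * (R m j / colMarginal A m j) := (Finset.sum_mul ..).symm
    _ = R m j := mul_div_cancel₀ _ (hA m j)

variable [Nonempty κ]

lemma colMarginal_pos (hA : ∀ m i j, 0 < A m i j) (m : ι) (j : γ) : 0 < colMarginal A m j :=
  Finset.sum_pos (fun i _ => hA m i j) Finset.univ_nonempty

variable [Fintype γ]

lemma sum_klTerm_colMarginal_le (hA : ∀ m i j, 0 ≤ A m i j) (hB : ∀ m i j, 0 < B m i j) (m : ι) :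
    ∑ j, klTerm (colMarginal A m j) (colMarginal B m j) ≤ ∑ i, ∑ j, klTerm (A m i j) (B m i j) := by
  rw [Finset.sum_comm]
  exact Finset.sum_le_sum fun j _ => klTerm_sum_le (hA m · j) (hB m · j)

lemma sum_klTerm_colMarginal_eq_iff (hA : ∀ m i j, 0 ≤ A m i j) (hB : ∀ m i j, 0 < B m i j)
    (m : ι) :
    ∑ j, klTerm (colMarginal A m j) (colMarginal B m j) = ∑ i, ∑ j, klTerm (A m i j) (B m i j) ↔
      A m = colRescale B (colMarginal A) m := by
  have logSum (j : γ) : klTerm (colMarginal A m j) (colMarginal B m j) ≤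
      ∑ i, klTerm (A m i j) (B m i j) := klTerm_sum_le (hA m · j) (hB m · j)
  rw [Finset.sum_comm, Finset.sum_eq_sum_iff_of_le fun j _ => logSum j]
  simp only [colMarginal, klTerm_sum_eq_iff (hA m · _) (hB m · _), Finset.mem_univ, true_imp_iff,
    funext_iff, colRescale]
  exact forall_comm

variable [Fintype ι] {lam : ι → ℝ}

lemma tupleVecKL_colMarginal_le (hlam : ∀ m, 0 ≤ lam m) (hA : ∀ m i j, 0 ≤ A m i j)
    (hB : ∀ m i j, 0 < B m i j) :
    tupleVecKL lam (colMarginal A) (colMarginal B) ≤ tupleMatKL lam A B :=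
  Finset.sum_le_sum fun m _ =>
    mul_le_mul_of_nonneg_left (sum_klTerm_colMarginal_le hA hB m) (hlam m)

lemma tupleVecKL_colMarginal_eq_iff (hlam : ∀ m, 0 < lam m) (hA : ∀ m i j, 0 ≤ A m i j)
    (hB : ∀ m i j, 0 < B m i j) :
    tupleVecKL lam (colMarginal A) (colMarginal B) = tupleMatKL lam A B ↔
      A = colRescale B (colMarginal A) := by
  rw [tupleVecKL, tupleMatKL, Finset.sum_eq_sum_iff_of_le fun m _ =>
    mul_le_mul_of_nonneg_left (sum_klTerm_colMarginal_le hA hB m) (hlam m).le, funext_iff]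
  simp only [Finset.mem_univ, true_imp_iff, mul_right_inj' (hlam _).ne',
    sum_klTerm_colMarginal_eq_iff hA hB]

lemma tupleMatKL_colRescale (hlam : ∀ m, 0 < lam m) (hB : ∀ m i j, 0 < B m i j)
    (hR : ∀ m j, 0 ≤ R m j) :
    tupleMatKL lam (colRescale B R) B = tupleVecKL lam R (colMarginal B) := by
  have hmarg : colMarginal (colRescale B R) = R :=
    colMarginal_colRescale fun m j => (colMarginal_pos hB m j).ne'
  have hnonneg := colRescale_nonneg (fun m i j => (hB m i j).le) hR
  have heq := (tupleVecKL_colMarginal_eq_iff hlam hnonneg hB).2 (by rw [hmarg])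
  rw [← heq, hmarg]

end ColumnMarginals

lemma nontrivial_setOf_nonneg {ι γ : Type*} [Nonempty ι] [Nonempty γ] :
    {R : ι → γ → ℝ | ∀ m j, 0 ≤ R m j}.Nontrivial :=
  ⟨0, fun _ _ => le_rfl, 1, fun _ _ => zero_le_one, zero_ne_one⟩

theorem KL_prox_lifting_cols_general {ι κ γ : Type*} [Fintype ι] [Fintype κ] [Fintype γ]
    [Nonempty ι] [Nonempty κ] [Nonempty γ] {lam : ι → ℝ} (hlam : ∀ m, 0 < lam m)
    {h : (ι → γ → ℝ) → EReal} {A : ι → κ → γ → ℝ} (hA : ∀ m i j, 0 < A m i j)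
    {P : ι → γ → ℝ} (hbot : h P ≠ ⊥)
    (hP : IsUniqMinOn (fun R => (tupleVecKL lam R (colMarginal A) : EReal) + h R)
      {R | ∀ m j, 0 ≤ R m j} P) :
    IsUniqMinOn (fun S => (tupleMatKL lam S A : EReal) + h (colMarginal S))
      {S | ∀ m i j, 0 ≤ S m i j} (colRescale A P) := by
  have htop : h P ≠ ⊤ := fun hT =>
    hP.ne_top nontrivial_setOf_nonneg (by simp only [hT, EReal.coe_add_top])
  refine hP.lift (q := colMarginal) (fun S hS => colMarginal_nonneg hS)
    (colRescale_nonneg (fun m i j => (hA m i j).le) hP.1) (fun S hS => ?_) ?_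
    fun S hS hSP hle => ?_
  · gcongr
    exact tupleVecKL_colMarginal_le (fun m => (hlam m).le) hS hA
  · rw [tupleMatKL_colRescale hlam hA hP.1,
      colMarginal_colRescale fun m j => (colMarginal_pos hA m j).ne']
  · subst hSP
    lift h (colMarginal S) to ℝ using ⟨htop, hbot⟩ with c
    have hKL : tupleMatKL lam S A ≤ tupleVecKL lam (colMarginal S) (colMarginal A) :=
      EReal.coe_le_coe_iff.1 ((EReal.addLECancellable_coe c).add_le_add_iff_right.1 hle)
    exact (tupleVecKL_colMarginal_eq_iff hlam hS hA).1
      (hKL.antisymm' (tupleVecKL_colMarginal_le (fun m => (hlam m).le) hS hA))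

/-- Lifting rule through column marginals: for `f(π₁,…,π_M) = h(π₁ᵀ𝟙,…,π_Mᵀ𝟙)`,
`Prox^{KL_λ}_f(π₁,…,π_M) = (π₁ diag(p̃₁ ⊘ p₁), …, π_M diag(p̃_M ⊘ p_M))` where
`p_m = π_mᵀ𝟙` and `(p̃₁,…,p̃_M) = Prox^{KL_λ}_h(p₁,…,p_M)` (assumed to exist uniquely,
with strictly positive entries). -/
theorem KL_prox_lifting_cols {M N : ℕ} (hM : 1 ≤ M) (hN : 1 ≤ N)
    (lam : Fin M → ℝ) (hlam : ∀ m, 0 < lam m)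
    (h : (Fin M → Fin N → ℝ) → EReal) (hh : ProperLSCConvex h)
    (Pi : Fin M → Fin N → Fin N → ℝ) (hPi : ∀ m i j, 0 < Pi m i j)
    (Ptil : Fin M → Fin N → ℝ) (hPtilpos : ∀ m i, 0 < Ptil m i)
    (hvec : IsUniqMinOn
      (fun R => ((KLlamVec lam R (fun m j => ∑ i, Pi m i j) : ℝ) : EReal) + h R)
      {R : Fin M → Fin N → ℝ | ∀ m i, 0 ≤ R m i} Ptil) :
    IsUniqMinOn
      (fun Sig => ((KLlamMat lam Sig Pi : ℝ) : EReal) +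
        h (fun m j => ∑ i, Sig m i j))
      {Sig : Fin M → Fin N → Fin N → ℝ | ∀ m i j, 0 ≤ Sig m i j}
      (fun m i j => Pi m i j * (Ptil m j / ∑ k, Pi m k j)) := by
  have : NeZero M := ⟨by omega⟩
  have : NeZero N := ⟨by omega⟩
  exact KL_prox_lifting_cols_general hlam hPi (hh.1 Ptil) hvec
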